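/- Let f : ℝ → ℝ be differentiable and strictly convex on all of ℝ, let n p : ℝ satisfy deriv f n < 0 and deriv f p > 0, let w be the unique point in (n, p) with deriv f w = 0, and let a b : ℕ → ℝ be the bisection sequences with a 0 = n, b 0 = p, and for each k, letting m = (a k + b k)/2: if deriv f m ≤ 0 then a (k+1) = m and b (k+1) = b k, else a (k+1) = a k and b (k+1) = m. Then for every k : ℕ, a k ≤ w and w < b k. -/

import Mathlib

/-!
By Darboux's theorem a derivative that does not vanish on an interval has constant sign there. So
`f'`, negative at `n`, positive at `p` and zero only at `w`, is nonpositive exactly on the part of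
`[n, p]` to the left of `w`. The test `f' m ≤ 0` therefore decides whether `m ≤ w`, and replacing
an endpoint by the midpoint according to this test keeps `w` in the half-open interval `[a k, b k)`.
-/

open Set

/-- The sequences `a` and `b` are the left and right endpoints of the bisection for the test `P`:
the midpoint becomes the new left endpoint if it satisfies `P` and the new right endpoint otherwise.
The initial interval is left free: it is given by `a 0` and `b 0`. -/
def IsBisection {𝕜 : Type*} [Field 𝕜] (P : 𝕜 → Prop) [DecidablePred P] (a b : ℕ → 𝕜) : Prop :=
  ∀ k, if P ((a k + b k) / 2)
    then a (k + 1) = (a k + b k) / 2 ∧ b (k + 1) = b k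
    else a (k + 1) = a k ∧ b (k + 1) = (a k + b k) / 2

namespace IsBisection

variable {𝕜 : Type*} [Field 𝕜] [LinearOrder 𝕜] [IsStrictOrderedRing 𝕜]
  {P : 𝕜 → Prop} [DecidablePred P] {a b : ℕ → 𝕜}

lemma left_lt_right (h : IsBisection P a b) (h₀ : a 0 < b 0) (k : ℕ) : a k < b k := by
  induction k with
  | zero => exact h₀
  | succ k ih =>
    have hk := h k
    split_ifs at hk <;> rw [hk.1, hk.2]
    · exact add_div_two_lt_right.mpr ih
    · exact left_lt_add_div_two.mpr ih

lemma monotone_left (h : IsBisection P a b) (h₀ : a 0 < b 0) : Monotone a := by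
  refine monotone_nat_of_le_succ fun k ↦ ?_
  have hk := h k
  split_ifs at hk <;> rw [hk.1]
  exact (left_lt_add_div_two.mpr (h.left_lt_right h₀ k)).le

lemma antitone_right (h : IsBisection P a b) (h₀ : a 0 < b 0) : Antitone b := by
  refine antitone_nat_of_succ_le fun k ↦ ?_
  have hk := h k
  split_ifs at hk <;> rw [hk.2]
  exact (add_div_two_lt_right.mpr (h.left_lt_right h₀ k)).le

lemma midpoint_mem_Ioo (h : IsBisection P a b) (h₀ : a 0 < b 0) (k : ℕ) :
    (a k + b k) / 2 ∈ Ioo (a 0) (b 0) :=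
  ⟨(h.monotone_left h₀ k.zero_le).trans_lt (left_lt_add_div_two.mpr (h.left_lt_right h₀ k)),
    (add_div_two_lt_right.mpr (h.left_lt_right h₀ k)).trans_le (h.antitone_right h₀ k.zero_le)⟩

lemma mem_Ico {w : 𝕜} (h : IsBisection P a b) (hP : ∀ x ∈ Ioo (a 0) (b 0), P x ↔ x ≤ w)
    (hw : w ∈ Ico (a 0) (b 0)) (k : ℕ) : w ∈ Ico (a k) (b k) := by
  induction k with
  | zero => exact hw
  | succ k ih =>
    have hPm := hP _ (h.midpoint_mem_Ioo (hw.1.trans_lt hw.2) k)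
    have hk := h k
    split_ifs at hk with hm <;> rw [hk.1, hk.2]
    · exact ⟨hPm.mp hm, ih.2⟩
    · exact ⟨ih.1, not_le.mp (hm ∘ hPm.mpr)⟩

end IsBisection

section Darboux

variable {f f' : ℝ → ℝ} {s : Set ℝ} {x y : ℝ}

lemma hasDerivWithinAt_neg_of_forall_ne_zero (hs : Convex ℝ s)
    (hf : ∀ z ∈ s, HasDerivWithinAt f (f' z) s z) (hf' : ∀ z ∈ s, f' z ≠ 0)
    (hx : x ∈ s) (hfx : f' x < 0) (hy : y ∈ s) : f' y < 0 :=
  (hasDerivWithinAt_forall_lt_or_forall_gt_of_forall_ne hs hf hf').elim (· y hy)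
    fun hpos ↦ (hfx.not_gt (hpos x hx)).elim

lemma hasDerivWithinAt_pos_of_forall_ne_zero (hs : Convex ℝ s)
    (hf : ∀ z ∈ s, HasDerivWithinAt f (f' z) s z) (hf' : ∀ z ∈ s, f' z ≠ 0)
    (hx : x ∈ s) (hfx : 0 < f' x) (hy : y ∈ s) : 0 < f' y :=
  (hasDerivWithinAt_forall_lt_or_forall_gt_of_forall_ne hs hf hf').elim
    (fun hneg ↦ (hfx.not_gt (hneg x hx)).elim) (· y hy)

lemma hasDerivWithinAt_nonpos_iff_le_of_unique_zero {n p w : ℝ}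
    (hf : ∀ z ∈ Icc n p, HasDerivWithinAt f (f' z) (Icc n p) z) (hn : f' n < 0) (hp : 0 < f' p)
    (hw : w ∈ Ioo n p) (hw₀ : f' w = 0) (hwu : ∀ z ∈ Ioo n p, f' z = 0 → z = w)
    (hx : x ∈ Ioo n p) : f' x ≤ 0 ↔ x ≤ w := by
  have hleft : Ico n w ⊆ Icc n p := Ico_subset_Icc_self.trans (Icc_subset_Icc_right hw.2.le)
  have hright : Ioc w p ⊆ Icc n p := Ioc_subset_Icc_self.trans (Icc_subset_Icc_left hw.1.le)
  have hne : ∀ z ∈ Icc n p, z ≠ w → f' z ≠ 0 := by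
    intro z hz hzw hz₀
    rcases eq_endpoints_or_mem_Ioo_of_mem_Icc hz with rfl | rfl | hz'
    · exact hn.ne hz₀
    · exact hp.ne' hz₀
    · exact hzw (hwu z hz' hz₀)
  rcases lt_trichotomy x w with hxw | rfl | hwx
  · have hneg : f' x < 0 := hasDerivWithinAt_neg_of_forall_ne_zero (convex_Ico n w)
      (fun z hz ↦ (hf z (hleft hz)).mono hleft) (fun z hz ↦ hne z (hleft hz) hz.2.ne)
      (left_mem_Ico.mpr hw.1) hn ⟨hx.1.le, hxw⟩
    exact iff_of_true hneg.le hxw.le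
  · exact iff_of_true hw₀.le le_rfl
  · have hpos : 0 < f' x := hasDerivWithinAt_pos_of_forall_ne_zero (convex_Ioc w p)
      (fun z hz ↦ (hf z (hright hz)).mono hright) (fun z hz ↦ hne z (hright hz) hz.1.ne')
      (right_mem_Ioc.mpr hw.2) hp ⟨hwx, hx.2.le⟩
    exact iff_of_false hpos.not_ge hwx.not_ge

end Darboux

theorem bisection_brackets_optimum_general {f f' : ℝ → ℝ} {a b : ℕ → ℝ} {w : ℝ}
    (hf : ∀ x ∈ Icc (a 0) (b 0), HasDerivWithinAt f (f' x) (Icc (a 0) (b 0)) x)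
    (ha : f' (a 0) < 0) (hb : 0 < f' (b 0)) (hstep : IsBisection (f' · ≤ 0) a b)
    (hw : w ∈ Ioo (a 0) (b 0)) (hw₀ : f' w = 0)
    (hwu : ∀ x ∈ Ioo (a 0) (b 0), f' x = 0 → x = w) (k : ℕ) :
    w ∈ Ico (a k) (b k) :=
  hstep.mem_Ico
    (fun _ ↦ hasDerivWithinAt_nonpos_iff_le_of_unique_zero hf ha hb hw hw₀ hwu)
    (Ioo_subset_Ico_self hw) k

theorem bisection_brackets_optimum
    (f : ℝ → ℝ) (hf : Differentiable ℝ f)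
    (hconv : StrictConvexOn ℝ Set.univ f)
    (n p : ℝ) (hn : deriv f n < 0) (hp : deriv f p > 0)
    (a b : ℕ → ℝ) (ha0 : a 0 = n) (hb0 : b 0 = p)
    (hstep : ∀ k : ℕ,
      if deriv f ((a k + b k) / 2) ≤ 0
      then a (k + 1) = (a k + b k) / 2 ∧ b (k + 1) = b k
      else a (k + 1) = a k ∧ b (k + 1) = (a k + b k) / 2)
    (w : ℝ) (hw : w ∈ Set.Ioo n p) (hw0 : deriv f w = 0)
    (hwu : ∀ w' : ℝ, w' ∈ Set.Ioo n p → deriv f w' = 0 → w' = w) :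
    ∀ k : ℕ, a k ≤ w ∧ w < b k := by
  subst ha0 hb0
  exact bisection_brackets_optimum_general (fun x _ ↦ (hf x).hasDerivAt.hasDerivWithinAt)
    hn hp hstep hw hw0 hwu
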